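/- Let c ∈ ℝ with -1 < c < 0. If z ∈ Z and (wₙ)_{n≥0} is a bounded backward orbit of z, then wₙ → θ as n → ∞; consequently Z ∩ K⁻ ⊆ W^u(θ). -/

import Mathlib

open Set Filter Topology

/-- The map `f(x,y) = (xy + c, x)`. -/
noncomputable def fc (c : ℝ) : ℝ × ℝ → ℝ × ℝ := fun z => (z.1 * z.2 + c, z.1)

/-- `a₁ = (1 - √(1-4c))/2`. -/
noncomputable def a1 (c : ℝ) : ℝ := (1 - Real.sqrt (1 - 4 * c)) / 2

/-- `a₂ = (1 + √(1-4c))/2`. -/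
noncomputable def a2 (c : ℝ) : ℝ := (1 + Real.sqrt (1 - 4 * c)) / 2

/-- `w` is a backward orbit of `z` under `fc c`: `w 0 = z` and `f(w (n+1)) = w n`. -/
def IsBackwardOrbit (c : ℝ) (z : ℝ × ℝ) (w : ℕ → ℝ × ℝ) : Prop :=
  w 0 = z ∧ ∀ n : ℕ, fc c (w (n + 1)) = w n

/-- The set `Z = Z' \ {θ, p, f(p), f²(p)}` from the paper. -/
noncomputable def Zset (c : ℝ) : Set (ℝ × ℝ) :=
  (Icc (0 : ℝ) (a2 c) ×ˢ Ici (a2 c) ∪ Icc (-1 : ℝ) 0 ×ˢ Ici (1 + c) ∪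
      Iic (-1 : ℝ) ×ˢ Icc (0 : ℝ) (1 + c) ∪ Iic (-1 : ℝ) ×ˢ Icc (-1 : ℝ) 0 ∪
      Icc (-1 : ℝ) 0 ×ˢ Iic (-1 : ℝ) ∪ Icc (0 : ℝ) (1 + c) ×ˢ Iic (-1 : ℝ) ∪
      Ici (1 + c) ×ˢ Icc (-1 : ℝ) 0 ∪ Icc (1 + c) (a2 c) ×ˢ Icc (0 : ℝ) (a2 c) ∪
      Ici (a2 c) ×ˢ Icc (0 : ℝ) (a2 c)) \
    {((a2 c, a2 c) : ℝ × ℝ), (-1, -1), (1 + c, -1), (-1, 1 + c)}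

/-!
The first coordinates of a backward orbit satisfy `s (n + 1) * s (n + 2) = s n - c`, hence
`s (n + 3) * (s n - c) = s (n + 1) * (s (n + 1) - c)`. This second relation expands: on `A` it
pushes `s (n + 1)` away from `a₂`, and on `B ∪ E ∪ F` it pushes `s (n + 1)` away from the
coordinates of the 3-cycle, by a definite factor every two steps. A bounded orbit therefore visits
`A` only if it is eventually `θ`, and stays in the regions around the 3-cycle only if it is the
3-cycle itself. Every other orbit ends up in `H₁`, where the recurrence contracts towards `θ`.
-/

section Expansion

theorem nonpos_of_expanding_of_bddAbove {x : ℕ → ℝ} {r : ℝ} (hr : 1 < r)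
    (hx : ∀ k, r * x k ≤ x (k + 1)) (hbdd : BddAbove (range x)) : x 0 ≤ 0 := by
  by_contra! h0
  exact not_bddAbove_of_tendsto_atTop (tendsto_atTop_of_geom_le h0 hr hx) hbdd

theorem nonpos_of_expanding_on_invariant {P : ℕ → Prop} {g : ℕ → ℝ} {r : ℝ} {d n : ℕ}
    (hr : 1 < r) (hbdd : BddAbove (range g)) (hinv : ∀ m, P m → P (m + d))
    (hexp : ∀ m, P m → r * g m ≤ g (m + d)) (hn : P n) : g n ≤ 0 := by
  have hP : ∀ k, P (n + d * k) := fun k => by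
    induction k with
    | zero => exact hn
    | succ k ih =>
      rw [mul_add_one, ← add_assoc]
      exact hinv _ ih
  refine nonpos_of_expanding_of_bddAbove (x := fun k => g (n + d * k)) hr (fun k => ?_)
    (hbdd.mono (range_comp_subset_range _ g))
  rw [mul_add_one, ← add_assoc]
  exact hexp _ (hP k)

end Expansion

section FixedPoint

variable {c : ℝ}

theorem a2_mul_self_add (hc : c ≤ 1 / 4) : a2 c * a2 c + c = a2 c := by
  have hsqrt : √(1 - 4 * c) * √(1 - 4 * c) = 1 - 4 * c := Real.mul_self_sqrt (by linarith)
  unfold a2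
  linarith

theorem one_lt_a2 (hc : c < 0) : 1 < a2 c := by
  have hsqrt : 1 < √(1 - 4 * c) := by
    rw [Real.lt_sqrt zero_le_one]
    linarith
  unfold a2
  linarith

end FixedPoint

section Regions

/-- Membership of `(u, v)` in the region `A` of the paper, with corner `(a, a)`. The region `H₂` is
its mirror image in the diagonal, so `(u, v) ∈ H₂` is `RegionA a v u`. -/
def RegionA (a u v : ℝ) : Prop := 0 ≤ u ∧ u ≤ a ∧ a ≤ v

/-- Membership of `(u, v)` in `H₁ ∪ H₂`, which is a single strip. -/
def RegionH (c a u v : ℝ) : Prop := 1 + c ≤ u ∧ 0 ≤ v ∧ v ≤ a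

/-- Membership of `(u, v)` in `B ∪ E ∪ F`. The set `C ∪ D ∪ G` is its mirror image in the diagonal,
so `(u, v) ∈ C ∪ D ∪ G` is `RegionBEF c v u`. -/
def RegionBEF (c u v : ℝ) : Prop := -1 ≤ u ∧ (u ≤ 0 ∧ 1 + c ≤ v ∨ u ≤ 1 + c ∧ v ≤ -1)

variable {a c u v y : ℝ}

theorem region_of_mem_Zset {z : ℝ × ℝ} (hc : -1 < c) (hc' : c < 0) (hz : z ∈ Zset c) :
    RegionA (a2 c) z.1 z.2 ∨ RegionH c (a2 c) z.1 z.2 ∨ RegionBEF c z.1 z.2 ∨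
      RegionBEF c z.2 z.1 := by
  have ha := one_lt_a2 hc'
  have hmem := hz.1
  simp only [mem_union, mem_prod, mem_Icc, mem_Ici, mem_Iic] at hmem
  unfold RegionA RegionH RegionBEF
  rcases hmem with (((((((h | h) | h) | h) | h) | h) | h) | h) | h <;> grind

theorem RegionA.swap_of_mul_eq (ha : 1 < a) (hfix : a * a + c = a) (hA : RegionA a u v)
    (h : v * y = u - c) : RegionA a y v := by
  obtain ⟨hu, hua, hav⟩ := hA
  refine ⟨?_, ?_, hav⟩
  · by_contra! hy
    nlinarith
  · by_contra! hy
    nlinarith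

theorem RegionA.of_swap_of_mul_eq (ha : 1 < a) (hfix : a * a + c = a) (hA : RegionA a v u)
    (h : v * y = u - c) : RegionA a v y := by
  obtain ⟨hv, hva, hau⟩ := hA
  have hv0 : 0 < v := hv.lt_of_ne' (by rintro rfl; nlinarith)
  refine ⟨hv, hva, ?_⟩
  by_contra! hy
  nlinarith

theorem RegionH.regionA_or_regionH_of_mul_eq (ha : 1 < a) (hfix : a * a + c = a)
    (hH : RegionH c a u v) (h : v * y = u - c) : RegionA a v y ∨ RegionH c a v y := by
  obtain ⟨hu, hv, hva⟩ := hH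
  have hprod : 1 ≤ v * y := by linarith
  have hy : 0 < y := pos_of_mul_pos_right (by linarith) hv
  rcases le_total a y with hay | hya
  · exact .inl ⟨hv, hva, hay⟩
  · refine .inr ⟨?_, hy.le, hya⟩
    have hcorner : (1 + c) * a ≤ 1 := by
      have hdefect : 1 - (1 + c) * a = (a - 1) ^ 2 * (a + 1) := by
        linear_combination (-a) * hfix
      have : 0 ≤ (a - 1) ^ 2 * (a + 1) := by positivity
      linarith
    refine le_of_mul_le_mul_right (a := a) ?_ (by linarith)
    calc (1 + c) * a ≤ v * y := hcorner.trans hprod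
      _ ≤ v * a := by gcongr

theorem RegionBEF.swap_or_regionA_or_regionH_of_mul_eq (hc : -1 < c) (ha : 1 < a)
    (hQ : RegionBEF c u v) (h : v * y = u - c) :
    RegionBEF c y v ∨ RegionA a v y ∨ RegionH c a v y := by
  obtain ⟨hu, ⟨hu0, hv⟩ | ⟨huc, hv⟩⟩ := hQ
  · have hy : -1 ≤ y := by
      by_contra! hy
      nlinarith
    rcases le_total y 0 with hy0 | hy0
    · exact .inl ⟨hy, .inl ⟨hy0, hv⟩⟩
    rcases le_total y a with hya | hay
    · exact .inr (.inr ⟨hv, hy0, hya⟩)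
    · refine .inr (.inl ⟨by linarith, ?_, hay⟩)
      by_contra! hva
      nlinarith
  · refine .inl ⟨?_, .inr ⟨?_, hv⟩⟩
    · by_contra! hy
      nlinarith
    · by_contra! hy
      nlinarith

theorem RegionBEF.of_swap_of_mul_eq (hc : -1 < c) (hQ : RegionBEF c v u)
    (h : v * y = u - c) : RegionBEF c v y := by
  obtain ⟨hv, ⟨hv0, hu⟩ | ⟨hvc, hu⟩⟩ := hQ
  · have hv_neg : v < 0 := hv0.lt_of_ne (by rintro rfl; linarith)
    refine ⟨hv, .inr ⟨by linarith, ?_⟩⟩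
    by_contra! hy
    nlinarith
  · have hv_ne : v ≠ 0 := by
      rintro rfl
      linarith
    refine ⟨hv, ?_⟩
    rcases hv_ne.lt_or_gt with hv_neg | hv_pos
    · refine .inl ⟨hv_neg.le, ?_⟩
      by_contra! hy
      nlinarith
    · refine .inr ⟨hvc, ?_⟩
      by_contra! hy
      nlinarith

theorem RegionA.expansion (ha : 1 < a) (hfix : a * a + c = a) (hA : RegionA a u v)
    (h : y * (u - c) = v * (v - c)) : (1 + a⁻¹) * (v - a) ≤ y - a := by
  obtain ⟨hu, hua, hav⟩ := hA
  have hc : c < 0 := by nlinarith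
  have hy : 0 < y := by
    refine pos_of_mul_pos_left (b := u - c) ?_ (by linarith)
    rw [h]
    exact mul_pos (by linarith) (by linarith)
  refine le_of_mul_le_mul_left (a := a * a) ?_ (by positivity)
  calc a * a * ((1 + a⁻¹) * (v - a)) = (v - a) * (a * a + a) := by field_simp
    _ ≤ (v - a) * (v + a - c) := by
      gcongr; linarith
    _ = y * (u - c) - a * a * a := by linear_combination -h + a * hfix
    _ ≤ y * (a * a) - a * a * a := by
      gcongr
      linarith
    _ = a * a * (y - a) := by ring

end Regions

section CycleGauge

/-- For `-1 < c`, the gauge of the interval `[-1, 1 + c]` spanned by the coordinates of the 3-cycle: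
it is `1` at both endpoints and measures how far outside the interval `t` lies. -/
noncomputable def cycleGauge (c t : ℝ) : ℝ := max (-t) (t / (1 + c))

variable {c t u v y : ℝ}

theorem cycleGauge_of_nonpos (hc : -1 < c) (ht : t ≤ 0) : cycleGauge c t = -t :=
  max_eq_left ((div_nonpos_of_nonpos_of_nonneg ht (by linarith)).trans (by linarith))

theorem cycleGauge_of_nonneg (hc : -1 < c) (ht : 0 ≤ t) : cycleGauge c t = t / (1 + c) :=
  max_eq_right ((neg_nonpos.2 ht).trans (div_nonneg ht (by linarith)))

theorem cycleGauge_le_abs_div (hc : -1 < c) (hc' : c ≤ 0) : cycleGauge c t ≤ |t| / (1 + c) := by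
  have hd : 0 < 1 + c := by linarith
  refine max_le ((neg_le_abs t).trans ?_) (by gcongr; exact le_abs_self t)
  exact le_div_self (abs_nonneg t) hd (by linarith)

theorem cycleGauge_le_one_iff (hc : -1 < c) : cycleGauge c t ≤ 1 ↔ -1 ≤ t ∧ t ≤ 1 + c := by
  rw [cycleGauge, max_le_iff, div_le_one (by linarith), neg_le]

theorem cycleGauge_expansion_of_le_neg_one (hc : -1 < c) (hc' : c ≤ 0) (hu : -1 ≤ u)
    (huc : u ≤ 1 + c) (hv : v ≤ -1) (h : y * (u - c) = v * (v - c)) :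
    (2 + c) * (cycleGauge c v - 1) ≤ cycleGauge c y - 1 := by
  have hd : 0 < 1 + c := by linarith
  have hy : v * (v - c) ≤ (1 + c) * cycleGauge c y := by
    rcases le_total 0 y with hy0 | hy0
    · rw [cycleGauge_of_nonneg hc hy0, mul_div_cancel₀ _ hd.ne']
      nlinarith
    · rw [cycleGauge_of_nonpos hc hy0]
      nlinarith
  rw [cycleGauge_of_nonpos hc (by linarith)]
  refine le_of_mul_le_mul_left (a := 1 + c) ?_ hd
  calc (1 + c) * ((2 + c) * (-v - 1)) = (-v - 1) * ((1 + c) * (2 + c)) := by ring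
    _ ≤ (-v - 1) * (1 + c - v) := by
      gcongr
      · linarith
      · nlinarith
    _ = v * (v - c) - (1 + c) := by ring
    _ ≤ (1 + c) * (cycleGauge c y - 1) := by linarith

theorem cycleGauge_expansion_of_one_add_le (hc : -1 < c) (hu : -1 ≤ u) (hv : 1 + c ≤ v)
    (hy : y ≤ 0) (h : y * (u - c) = v * (v - c)) :
    (2 + c) * (cycleGauge c v - 1) ≤ cycleGauge c y - 1 := by
  have hd : 0 < 1 + c := by linarith
  obtain ⟨n, rfl⟩ : ∃ n, v = (1 + c) * n := ⟨v / (1 + c), by field_simp⟩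
  have hn : 1 ≤ n := le_of_mul_le_mul_left (by linarith) hd
  rw [cycleGauge_of_nonneg hc (by positivity), cycleGauge_of_nonpos hc hy,
    mul_div_cancel_left₀ _ hd.ne']
  have hy_lower : n * ((1 + c) * n - c) ≤ -y := by
    refine le_of_mul_le_mul_left (a := 1 + c) ?_ hd
    nlinarith
  calc (2 + c) * (n - 1) ≤ (n - 1) * ((1 + c) * n + 1) := by nlinarith
    _ = n * ((1 + c) * n - c) - 1 := by ring
    _ ≤ -y - 1 := by linarith

theorem RegionBEF.cycleGauge_expansion {x : ℝ} (hc : -1 < c) (hc' : c ≤ 0)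
    (huv : RegionBEF c u v) (hxv : RegionBEF c x v) (hvx : v * x = u - c) (hxy : x * y = v - c) :
    (2 + c) * (cycleGauge c v - 1) ≤ cycleGauge c y - 1 := by
  have h : y * (u - c) = v * (v - c) := by linear_combination v * hxy - y * hvx
  obtain ⟨hu, ⟨-, hv⟩ | ⟨huc, hv⟩⟩ := huv
  · have hx : x ≤ 0 := by
      obtain ⟨-, ⟨hx, -⟩ | ⟨-, hv'⟩⟩ := hxv <;> linarith
    have hy : y ≤ 0 := by
      by_contra! hy
      nlinarith
    exact cycleGauge_expansion_of_one_add_le hc hu hv hy h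
  · exact cycleGauge_expansion_of_le_neg_one hc hc' hu huc hv h

theorem RegionBEF.eq_of_cycleGauge_le_one (hc : -1 < c) (hQ : RegionBEF c u v)
    (hv : cycleGauge c v ≤ 1) : u ≤ 0 ∧ v = 1 + c ∨ v = -1 := by
  obtain ⟨hv1, hvc⟩ := (cycleGauge_le_one_iff hc).1 hv
  obtain ⟨-, ⟨hu, hv⟩ | ⟨-, hv⟩⟩ := hQ
  · exact .inl ⟨hu, le_antisymm hvc hv⟩
  · exact .inr (le_antisymm hv hv1)

end CycleGauge

section ThreeCycle

/-- The unique 3-cycle `{p, f(p), f²(p)}` of `f`. -/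
def threeCycle (c : ℝ) : Set (ℝ × ℝ) := {(-1, -1), (1 + c, -1), (-1, 1 + c)}

variable {c : ℝ}

theorem mapsTo_fc_threeCycle : MapsTo (fc c) (threeCycle c) (threeCycle c) := by
  rintro _ (rfl | rfl | rfl) <;> simp [fc, threeCycle]

theorem notMem_threeCycle_of_mem_Zset {z : ℝ × ℝ} (hz : z ∈ Zset c) : z ∉ threeCycle c :=
  fun h => hz.2 (mem_insert_of_mem _ h)

end ThreeCycle

/-- `s` is the sequence of first coordinates of a backward orbit of `f`: the orbit is then
`n ↦ (s n, s (n + 1))`. -/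
def IsBackwardSeq (c : ℝ) (s : ℕ → ℝ) : Prop := ∀ n, s (n + 1) * s (n + 2) = s n - c

namespace IsBackwardSeq

variable {a c : ℝ} {s : ℕ → ℝ} {n : ℕ}

theorem mul_sub_eq (hs : IsBackwardSeq c s) (n : ℕ) :
    s (n + 3) * (s n - c) = s (n + 1) * (s (n + 1) - c) := by
  linear_combination s (n + 1) * hs (n + 1) - s (n + 3) * hs n

theorem eq_add_of_eq_of_eq (hs : IsBackwardSeq c s) (ha : a ≠ 0) (hfix : a * a + c = a)
    (h0 : s n = a) (h1 : s (n + 1) = a) (k : ℕ) : s (n + k) = a := by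
  induction k using Nat.twoStepInduction with
  | zero => exact h0
  | one => exact h1
  | more k ih ih' =>
    refine mul_left_cancel₀ ha ?_
    have hrec := hs (n + k)
    rw [add_assoc, ih', ih] at hrec
    rw [← add_assoc]
    linarith

theorem regionA_add_two (hs : IsBackwardSeq c s) (ha : 1 < a) (hfix : a * a + c = a)
    (hA : RegionA a (s n) (s (n + 1))) : RegionA a (s (n + 2)) (s (n + 3)) :=
  (hA.swap_of_mul_eq ha hfix (hs n)).of_swap_of_mul_eq ha hfix (hs (n + 1))

theorem succ_eq_of_regionA (hs : IsBackwardSeq c s) (hbdd : BddAbove (range s)) (ha : 1 < a)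
    (hfix : a * a + c = a) (hA : RegionA a (s n) (s (n + 1))) : s (n + 1) = a := by
  refine le_antisymm (sub_nonpos.1 ?_) hA.2.2
  refine nonpos_of_expanding_on_invariant (P := fun m => RegionA a (s m) (s (m + 1)))
    (g := fun m => s (m + 1) - a) (r := 1 + a⁻¹) (d := 2) ?_ ?_
    (fun m hm => hs.regionA_add_two ha hfix hm)
    (fun m hm => hm.expansion ha hfix (hs.mul_sub_eq m)) hA
  · exact lt_add_of_pos_right 1 (by positivity)
  · obtain ⟨M, hM⟩ := hbdd
    exact ⟨M - a, forall_mem_range.2 fun m => sub_le_sub_right (hM (mem_range_self _)) a⟩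

theorem tendsto_of_regionA (hs : IsBackwardSeq c s) (hbdd : BddAbove (range s)) (ha : 1 < a)
    (hfix : a * a + c = a) (hA : RegionA a (s n) (s (n + 1))) : Tendsto s atTop (𝓝 a) := by
  have ha0 : a ≠ 0 := by positivity
  have h1 : s (n + 1) = a := hs.succ_eq_of_regionA hbdd ha hfix hA
  have h3 : s (n + 3) = a := hs.succ_eq_of_regionA hbdd ha hfix (hs.regionA_add_two ha hfix hA)
  have h2 : s (n + 2) = a := by
    have hrec : s (n + 2) * s (n + 3) = s (n + 1) - c := hs (n + 1)
    rw [h1, h3] at hrec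
    exact mul_right_cancel₀ ha0 (by linarith)
  refine tendsto_atTop_of_eventually_const (i₀ := n + 2) fun m hm => ?_
  obtain ⟨k, rfl⟩ := Nat.exists_eq_add_of_le hm
  exact hs.eq_add_of_eq_of_eq ha0 hfix h2 h3 k

theorem tendsto_of_forall_mem_Icc (hs : IsBackwardSeq c s) (ha : 1 < a) (hfix : a * a + c = a)
    (hmem : ∀ n, s n ∈ Icc 0 a) : Tendsto s atTop (𝓝 a) := by
  have hcontract : ∀ n, a - s (n + 1) ≤ a⁻¹ * (a - s n) := fun n => by
    rw [le_inv_mul_iff₀ (by linarith)]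
    nlinarith [hs n, (hmem (n + 1)).1, (hmem (n + 2)).2]
  have hgeom : ∀ n, a - a⁻¹ ^ n * (a - s 0) ≤ s n := fun n => by
    linarith [le_geom (u := fun n => a - s n) (by positivity : 0 ≤ a⁻¹) n fun k _ => hcontract k]
  have hlim : Tendsto (fun n : ℕ => a - a⁻¹ ^ n * (a - s 0)) atTop (𝓝 a) := by
    have hpow := tendsto_pow_atTop_nhds_zero_of_lt_one (by positivity) (inv_lt_one_of_one_lt₀ ha)
    simpa using (hpow.mul_const (a - s 0)).const_sub a
  exact tendsto_of_tendsto_of_tendsto_of_le_of_le hlim tendsto_const_nhds hgeom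
    fun n => (hmem n).2

theorem tendsto_of_regionH (hs : IsBackwardSeq c s) (hbdd : BddAbove (range s)) (ha : 1 < a)
    (hfix : a * a + c = a) (hH : RegionH c a (s n) (s (n + 1))) :
    Tendsto s atTop (𝓝 a) := by
  by_cases hA : ∃ m, RegionA a (s m) (s (m + 1))
  · obtain ⟨m, hm⟩ := hA
    exact hs.tendsto_of_regionA hbdd ha hfix hm
  have hstay : ∀ k, RegionH c a (s (n + k)) (s (n + k + 1)) := fun k => by
    induction k with
    | zero => exact hH
    | succ k ih =>
      exact (ih.regionA_or_regionH_of_mul_eq ha hfix (hs (n + k))).resolve_left fun h => hA ⟨_, h⟩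
  rw [← tendsto_add_atTop_iff_nat (n + 1)]
  refine tendsto_of_forall_mem_Icc (c := c) (fun k => ?_) ha hfix fun k => ?_
  · convert hs (k + (n + 1)) using 3 <;> ring
  · rw [← add_assoc, add_comm k n]
    exact (hstay k).2

theorem cycleGauge_le_one_of_regionBEF {M : ℝ} (hs : IsBackwardSeq c s) (hM : ∀ n, |s n| ≤ M)
    (hc : -1 < c) (hc' : c ≤ 0)
    (hswap : ∀ m, RegionBEF c (s m) (s (m + 1)) → RegionBEF c (s (m + 2)) (s (m + 1)))
    (hQ : RegionBEF c (s n) (s (n + 1))) : cycleGauge c (s (n + 1)) ≤ 1 := by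
  refine sub_nonpos.1 (nonpos_of_expanding_on_invariant
    (P := fun m => RegionBEF c (s m) (s (m + 1))) (g := fun m => cycleGauge c (s (m + 1)) - 1)
    (r := 2 + c) (d := 2) (by linarith) ?_
    (fun m hm => (hswap m hm).of_swap_of_mul_eq hc (hs (m + 1)))
    (fun m hm => hm.cycleGauge_expansion hc hc' (hswap m hm) (hs m) (hs (m + 1))) hQ)
  refine ⟨M / (1 + c) - 1, forall_mem_range.2 fun m => sub_le_sub_right ?_ 1⟩
  refine (cycleGauge_le_abs_div hc hc').trans ?_
  gcongr
  · linarith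
  · exact hM _

theorem mem_threeCycle_of_regionBEF {M : ℝ} (hs : IsBackwardSeq c s) (hM : ∀ n, |s n| ≤ M)
    (hc : -1 < c) (hc' : c ≤ 0)
    (hswap : ∀ m, RegionBEF c (s m) (s (m + 1)) → RegionBEF c (s (m + 2)) (s (m + 1)))
    (hQ : RegionBEF c (s n) (s (n + 1))) : (s (n + 2), s (n + 3)) ∈ threeCycle c := by
  have hd : 0 < 1 + c := by linarith
  have hQ' : RegionBEF c (s (n + 2)) (s (n + 3)) :=
    (hswap n hQ).of_swap_of_mul_eq hc (hs (n + 1))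
  have hrec : s (n + 2) * s (n + 3) = s (n + 1) - c := hs (n + 1)
  have hone := hQ.eq_of_cycleGauge_le_one hc
    (hs.cycleGauge_le_one_of_regionBEF hM hc hc' hswap hQ)
  have hthree := hQ'.eq_of_cycleGauge_le_one hc
    (hs.cycleGauge_le_one_of_regionBEF hM hc hc' hswap hQ')
  simp only [threeCycle, mem_insert_iff, mem_singleton_iff, Prod.mk.injEq]
  rcases hone with ⟨-, h1⟩ | h1 <;> rcases hthree with ⟨h2, h3⟩ | h3 <;> rw [h1, h3] at hrec
  · nlinarith
  · exact .inl ⟨by linarith, h3⟩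
  · exact .inr (.inr ⟨mul_right_cancel₀ hd.ne' (by linarith), h3⟩)
  · exact .inr (.inl ⟨by linarith, h3⟩)

theorem tendsto_or_mem_threeCycle_of_regionBEF {M : ℝ} (hs : IsBackwardSeq c s)
    (hM : ∀ n, |s n| ≤ M) (hc : -1 < c) (hc' : c ≤ 0) (ha : 1 < a) (hfix : a * a + c = a)
    (hQ : RegionBEF c (s n) (s (n + 1))) :
    Tendsto s atTop (𝓝 a) ∨ (s (n + 2), s (n + 3)) ∈ threeCycle c := by
  have hbdd : BddAbove (range s) := ⟨M, forall_mem_range.2 fun m => (abs_le.1 (hM m)).2⟩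
  refine or_iff_not_imp_left.2 fun hlim => hs.mem_threeCycle_of_regionBEF hM hc hc' ?_ hQ
  intro m hm
  rcases hm.swap_or_regionA_or_regionH_of_mul_eq hc ha (hs m) with h | h | h
  · exact h
  · exact absurd (hs.tendsto_of_regionA hbdd ha hfix h) hlim
  · exact absurd (hs.tendsto_of_regionH hbdd ha hfix h) hlim

end IsBackwardSeq

namespace IsBackwardOrbit

variable {c : ℝ} {z : ℝ × ℝ} {w : ℕ → ℝ × ℝ}

theorem eq_fst_fst_succ (hw : IsBackwardOrbit c z w) (n : ℕ) :
    w n = ((w n).1, (w (n + 1)).1) :=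
  Prod.ext rfl (congrArg Prod.snd (hw.2 n)).symm

theorem isBackwardSeq_fst (hw : IsBackwardOrbit c z w) : IsBackwardSeq c fun n => (w n).1 := by
  intro n
  have hfst : (w (n + 1)).1 * (w (n + 1)).2 + c = (w n).1 := congrArg Prod.fst (hw.2 n)
  rw [hw.eq_fst_fst_succ (n + 1)] at hfst
  exact eq_sub_of_add_eq hfst

theorem iterate_fc_apply (hw : IsBackwardOrbit c z w) (n : ℕ) : (fc c)^[n] (w n) = z := by
  induction n with
  | zero => exact hw.1
  | succ n ih => rw [Function.iterate_succ_apply, hw.2, ih]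

theorem tendsto_of_tendsto_fst {a : ℝ} (hw : IsBackwardOrbit c z w)
    (h : Tendsto (fun n => (w n).1) atTop (𝓝 a)) : Tendsto w atTop (𝓝 (a, a)) :=
  (h.prodMk_nhds ((tendsto_add_atTop_iff_nat 1).2 h)).congr fun n => (hw.eq_fst_fst_succ n).symm

theorem tendsto_of_regionBEF {n : ℕ} {M : ℝ} (hc : -1 < c) (hc' : c < 0)
    (hw : IsBackwardOrbit c z w) (hM : ∀ n, ‖w n‖ ≤ M) (hz : z ∉ threeCycle c)
    (hQ : RegionBEF c (w n).1 (w (n + 1)).1) : Tendsto (fun n => (w n).1) atTop (𝓝 (a2 c)) := by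
  refine (hw.isBackwardSeq_fst.tendsto_or_mem_threeCycle_of_regionBEF
    (fun n => (norm_fst_le (w n)).trans (hM n)) hc hc'.le (one_lt_a2 hc')
    (a2_mul_self_add (by linarith)) hQ).resolve_right fun hcycle => hz ?_
  rw [← hw.iterate_fc_apply (n + 2)]
  refine mapsTo_fc_threeCycle.iterate (n + 2) ?_
  rw [hw.eq_fst_fst_succ (n + 2)]
  exact hcycle

theorem tendsto_of_mem_Zset {M : ℝ} (hc : -1 < c) (hc' : c < 0) (hz : z ∈ Zset c)
    (hw : IsBackwardOrbit c z w) (hM : ∀ n, ‖w n‖ ≤ M) : Tendsto w atTop (𝓝 (a2 c, a2 c)) := by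
  have hs := hw.isBackwardSeq_fst
  have ha := one_lt_a2 hc'
  have hfix : a2 c * a2 c + c = a2 c := a2_mul_self_add (by linarith)
  have hbdd : BddAbove (range fun n => (w n).1) :=
    ⟨M, forall_mem_range.2 fun n => (le_abs_self _).trans ((norm_fst_le (w n)).trans (hM n))⟩
  have hcycle := notMem_threeCycle_of_mem_Zset hz
  have hregion := region_of_mem_Zset hc hc' hz
  rw [← hw.1, hw.eq_fst_fst_succ 0] at hregion
  refine hw.tendsto_of_tendsto_fst ?_
  rcases hregion with hA | hH | hBEF | hCDG
  · exact hs.tendsto_of_regionA hbdd ha hfix hA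
  · exact hs.tendsto_of_regionH hbdd ha hfix hH
  · exact hw.tendsto_of_regionBEF hc hc' hM hcycle hBEF
  · exact hw.tendsto_of_regionBEF hc hc' hM hcycle (hCDG.of_swap_of_mul_eq hc (hs 0))

end IsBackwardOrbit

theorem stmt17 (c : ℝ) (hc1 : -1 < c) (hc2 : c < 0) :
    (∀ z ∈ Zset c, ∀ w : ℕ → ℝ × ℝ, IsBackwardOrbit c z w →
      (∃ M : ℝ, ∀ n : ℕ, ‖w n‖ ≤ M) → Tendsto w atTop (𝓝 (a2 c, a2 c))) ∧
    Zset c ∩ {z : ℝ × ℝ | ∃ w : ℕ → ℝ × ℝ, IsBackwardOrbit c z w ∧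
        ∃ M : ℝ, ∀ n : ℕ, ‖w n‖ ≤ M} ⊆
      {z : ℝ × ℝ | ∃ w : ℕ → ℝ × ℝ, IsBackwardOrbit c z w ∧
        Tendsto w atTop (𝓝 (a2 c, a2 c))} := by
  have hlim : ∀ z ∈ Zset c, ∀ w : ℕ → ℝ × ℝ, IsBackwardOrbit c z w →
      (∃ M : ℝ, ∀ n : ℕ, ‖w n‖ ≤ M) → Tendsto w atTop (𝓝 (a2 c, a2 c)) := by
    rintro z hz w hw ⟨M, hM⟩
    exact hw.tendsto_of_mem_Zset hc1 hc2 hz hM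
  refine ⟨hlim, ?_⟩
  rintro z ⟨hz, w, hw, hbdd⟩
  exact ⟨w, hw, hlim z hz w hw hbdd⟩
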